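/- arXiv:2512.23403 — 4 statements merged into one kernel-verified Lean document; each statement's English description precedes it below -/
import Mathlib

section
/- Let A be an r-register finite-memory automaton over an infinite alphabet Σ with state set S and distinguished letters Δ. Then for every word σ ∈ L(A) and every decomposition σ = ψχω with |χ| > card(S), there exist a decomposition χ = τυφ and a Δ-permutation α of Σ of order at most (2r)! such that: 0 < |υ| ≤ card(S); for every k ≥ 1, the word ψ τ υ α(υ) α²(υ) ⋯ α^k(υ) α^k(φω) belongs to L(A); and the word ψ τ α⁻¹(φω) belongs to L(A). -/
/-- An `r`-register finite-memory automaton over the alphabet `Sigma`,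
with states `S`. -/
structure FMA (Sigma : Type) (S : Type) (r : ℕ) where
  s0 : S
  F : Set S
  Δ : Finset Sigma
  θ0 : Fin r → Sigma
  θ0_notin : ∀ i, θ0 i ∉ Δ
  θ0_inj : Function.Injective θ0
  δΔ : S → Sigma → Set S
  δeq : S → Fin r → Set S
  δskip : S → Set S
  δrepl : S → Set (S × Fin r)

namespace FMA

variable {Sigma S : Type} {r : ℕ}

/-- One step of the automaton on letter `σ`, from configuration `c` to `c'`. -/
def Step (A : FMA Sigma S r) (c : S × (Fin r → Sigma)) (σ : Sigma)
    (c' : S × (Fin r → Sigma)) : Prop :=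
  (σ ∈ A.Δ ∧ c'.1 ∈ A.δΔ c.1 σ ∧ c'.2 = c.2) ∨
  (∃ i, σ = c.2 i ∧ c'.1 ∈ A.δeq c.1 i ∧ c'.2 = c.2) ∨
  (σ ∉ A.Δ ∧ (∀ i, σ ≠ c.2 i) ∧
    ((c'.1 ∈ A.δskip c.1 ∧ c'.2 = c.2) ∨
     (∃ i, (c'.1, i) ∈ A.δrepl c.1 ∧ c'.2 = Function.update c.2 i σ)))

/-- `Steps A c w c'` : reading the word `w` from configuration `c`
the automaton can reach configuration `c'`. -/
inductive Steps (A : FMA Sigma S r) :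
    S × (Fin r → Sigma) → List Sigma → S × (Fin r → Sigma) → Prop
  | nil (c) : Steps A c [] c
  | cons {c c' c'' σ w} : A.Step c σ c' → Steps A c' w c'' → Steps A c (σ :: w) c''

/-- The language accepted by `A`. -/
def Lang (A : FMA Sigma S r) : Set (List Sigma) :=
  {w | ∃ c, A.Steps (A.s0, A.θ0) w c ∧ c.1 ∈ A.F}

end FMA

/-- A `Δ`-permutation of the alphabet: a bijection fixing every distinguished letter. -/
def IsDeltaPerm {Sigma : Type} (Δ : Finset Sigma) (α : Equiv.Perm Sigma) : Prop :=
  ∀ δ ∈ Δ, α δ = δ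

/-!
A run on `χ` visits more configurations than there are states, so it returns to some state `s`:
it reads a factor `υ` while passing from `(s, θ)` to `(s, θ')`. Both assignments are injective and
avoid `Δ`, so a `Δ`-permutation `α` supported on the at most `2r` letters occurring in them maps
`θ` to `θ'`. Since `Δ`-permutations map runs to runs, translating the loop by powers of `α` iterates
it, with the rest of the run translated accordingly, while translating the rest by `α⁻¹` skips it.
-/

theorem exists_lt_le_card_map_eq {α : Type*} [Fintype α] (f : ℕ → α) :
    ∃ i j, i < j ∧ j ≤ Fintype.card α ∧ f i = f j := by
  obtain ⟨i, j, hne, hij⟩ := Fintype.exists_ne_map_eq_of_card_lt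
    (fun i : Fin (Fintype.card α + 1) => f i) (by simp)
  rcases lt_or_gt_of_ne hne with hlt | hgt
  · exact ⟨i, j, hlt, Nat.lt_succ_iff.mp j.isLt, hij⟩
  · exact ⟨j, i, hgt, Nat.lt_succ_iff.mp i.isLt, hij.symm⟩

theorem injective_update_of_notMem_range {α β : Type*} [DecidableEq α] {f : α → β}
    (hf : Function.Injective f) {b : β} (hb : b ∉ Set.range f) (a : α) :
    Function.Injective (Function.update f a b) := by
  intro x y hxy
  simp only [Function.update_apply] at hxy
  grind [Function.Injective]

theorem exists_perm_comp_eq_of_injective {ι α : Type*} [Finite ι] {f g : ι → α}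
    (hf : Function.Injective f) (hg : Function.Injective g) :
    ∃ p : Equiv.Perm α, p ∘ f = g ∧ (∀ a ∉ Set.range f ∪ Set.range g, p a = a) ∧
      orderOf p ∣ (2 * Nat.card ι).factorial := by
  classical
  set T : Set α := Set.range f ∪ Set.range g
  have : Finite T := ((Set.finite_range f).union (Set.finite_range g)).to_subtype
  have hT : Nat.card T ≤ 2 * Nat.card ι := calc
    T.ncard ≤ (Set.range f).ncard + (Set.range g).ncard := Set.ncard_union_le _ _
    _ = 2 * Nat.card ι := by
      rw [Set.ncard_range_of_injective hf, Set.ncard_range_of_injective hg, two_mul]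
  let f' : ι → T := fun i => ⟨f i, Or.inl ⟨i, rfl⟩⟩
  let g' : ι → T := fun i => ⟨g i, Or.inr ⟨i, rfl⟩⟩
  obtain ⟨q, hq⟩ := Equiv.Perm.exists_extending_pair f' g'
    (fun _ _ h => hf (congrArg Subtype.val h)) (fun _ _ h => hg (congrArg Subtype.val h))
  refine ⟨Equiv.Perm.ofSubtype q, ?_, fun a ha => Equiv.Perm.ofSubtype_apply_of_not_mem q ha, ?_⟩
  · funext i
    exact (Equiv.Perm.ofSubtype_apply_coe q (f' i)).trans (congrArg Subtype.val (hq i))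
  · rw [orderOf_injective Equiv.Perm.ofSubtype Equiv.Perm.ofSubtype_injective]
    calc
      orderOf q ∣ Nat.card (Equiv.Perm T) := orderOf_dvd_natCard q
      _ = (Nat.card T).factorial := Nat.card_perm
      _ ∣ (2 * Nat.card ι).factorial := Nat.factorial_dvd_factorial hT

theorem isDeltaPerm_iff_mem_fixingSubgroup {Sigma : Type} {Δ : Finset Sigma}
    {α : Equiv.Perm Sigma} :
    IsDeltaPerm Δ α ↔ α ∈ fixingSubgroup (Equiv.Perm Sigma) (Δ : Set Sigma) := by
  simp [IsDeltaPerm, mem_fixingSubgroup_iff]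

namespace IsDeltaPerm

variable {Sigma : Type} {Δ : Finset Sigma} {α : Equiv.Perm Sigma}

theorem pow (hα : IsDeltaPerm Δ α) (k : ℕ) : IsDeltaPerm Δ (α ^ k) := by
  rw [isDeltaPerm_iff_mem_fixingSubgroup] at hα ⊢
  exact pow_mem hα k

theorem inv (hα : IsDeltaPerm Δ α) : IsDeltaPerm Δ α⁻¹ := by
  rw [isDeltaPerm_iff_mem_fixingSubgroup] at hα ⊢
  exact inv_mem hα

theorem apply_mem_iff (hα : IsDeltaPerm Δ α) {σ : Sigma} : α σ ∈ Δ ↔ σ ∈ Δ := by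
  constructor
  · intro h
    rwa [α.injective (hα _ h)] at h
  · intro h
    rwa [hα σ h]

end IsDeltaPerm

namespace FMA

variable {Sigma S : Type} {r : ℕ} {A : FMA Sigma S r} {c d e : S × (Fin r → Sigma)}

/-- The paper's condition on the register assignment of a configuration; `Step` and `Steps` are
defined on arbitrary pairs, so it has to be carried along as an invariant of runs. -/
structure IsConfig (A : FMA Sigma S r) (c : S × (Fin r → Sigma)) : Prop where
  injective : Function.Injective c.2
  notMem : ∀ i, c.2 i ∉ A.Δ

theorem isConfig_init (A : FMA Sigma S r) : A.IsConfig (A.s0, A.θ0) :=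
  ⟨A.θ0_inj, A.θ0_notin⟩

theorem IsConfig.step {σ : Sigma} (hc : A.IsConfig c) (h : A.Step c σ d) : A.IsConfig d := by
  have of_eq (heq : d.2 = c.2) : A.IsConfig d := ⟨heq ▸ hc.injective, heq ▸ hc.notMem⟩
  rcases h with ⟨-, -, heq⟩ | ⟨-, -, -, heq⟩ | ⟨hσΔ, hσ, ⟨-, heq⟩ | ⟨i, -, heq⟩⟩
  · exact of_eq heq
  · exact of_eq heq
  · exact of_eq heq
  · refine ⟨?_, ?_⟩
    · rw [heq]
      exact injective_update_of_notMem_range hc.injective (fun ⟨j, hj⟩ => hσ j hj.symm) i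
    · rw [heq, Function.forall_update_iff c.2 fun _ a => a ∉ A.Δ]
      exact ⟨hσΔ, fun j _ => hc.notMem j⟩

theorem IsConfig.steps {w : List Sigma} (hc : A.IsConfig c) (h : A.Steps c w d) :
    A.IsConfig d := by
  induction h with
  | nil => exact hc
  | cons hstep _ ih => exact ih (hc.step hstep)

theorem steps_append {u v : List Sigma} :
    A.Steps c (u ++ v) e ↔ ∃ d, A.Steps c u d ∧ A.Steps d v e := by
  constructor
  · intro h
    induction u generalizing c with
    | nil => exact ⟨c, .nil c, h⟩
    | cons σ u ih =>
      obtain _ | ⟨hstep, hrest⟩ := h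
      obtain ⟨d, hu, hv⟩ := ih hrest
      exact ⟨d, .cons hstep hu, hv⟩
  · rintro ⟨d, hu, hv⟩
    induction hu with
    | nil => exact hv
    | cons hstep _ ih => exact .cons hstep (ih hv)

theorem Steps.append {u v : List Sigma} (hu : A.Steps c u d) (hv : A.Steps d v e) :
    A.Steps c (u ++ v) e :=
  steps_append.mpr ⟨d, hu, hv⟩

theorem Step.map {σ : Sigma} (h : A.Step c σ d) {α : Equiv.Perm Sigma}
    (hα : IsDeltaPerm A.Δ α) : A.Step (c.1, α ∘ c.2) (α σ) (d.1, α ∘ d.2) := by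
  rcases h with ⟨hσ, hs, heq⟩ | ⟨i, rfl, hs, heq⟩ | ⟨hσΔ, hσ, hnew⟩
  · exact .inl ⟨hα.apply_mem_iff.mpr hσ, by rwa [hα σ hσ], by rw [heq]⟩
  · exact .inr (.inl ⟨i, rfl, hs, by rw [heq]⟩)
  · refine .inr (.inr ⟨mt hα.apply_mem_iff.mp hσΔ, fun i hi => hσ i (α.injective hi), ?_⟩)
    rcases hnew with ⟨hs, heq⟩ | ⟨i, hs, heq⟩
    · exact .inl ⟨hs, by rw [heq]⟩
    · exact .inr ⟨i, hs, by rw [heq, Function.comp_update]⟩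

theorem Steps.map {w : List Sigma} (h : A.Steps c w d) {α : Equiv.Perm Sigma}
    (hα : IsDeltaPerm A.Δ α) : A.Steps (c.1, α ∘ c.2) (w.map α) (d.1, α ∘ d.2) := by
  induction h with
  | nil => exact .nil _
  | cons hstep _ ih => exact .cons (hstep.map hα) ih

theorem Steps.exists_trace {w : List Sigma} (h : A.Steps c w d) :
    ∃ f : ℕ → S × (Fin r → Sigma), f 0 = c ∧ f w.length = d ∧
      ∀ i j, i ≤ j → j ≤ w.length → A.Steps (f i) ((w.take j).drop i) (f j) := by
  induction h with
  | nil c => exact ⟨fun _ => c, rfl, rfl, fun i j _ _ => by simpa using .nil c⟩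
  | @cons c c' d σ w hstep _ ih =>
    obtain ⟨f, rfl, rfl, hf⟩ := ih
    refine ⟨fun n => n.casesOn c f, rfl, rfl, ?_⟩
    rintro (_ | i) (_ | j) hij hj
    · exact .nil c
    · exact .cons hstep (hf 0 j j.zero_le (Nat.le_of_succ_le_succ hj))
    · exact absurd hij i.not_succ_le_zero
    · exact hf i j (Nat.le_of_succ_le_succ hij) (Nat.le_of_succ_le_succ hj)

theorem Steps.exists_loop [Fintype S] {w : List Sigma} (h : A.Steps c w d)
    (hw : Fintype.card S ≤ w.length) :
    ∃ (τ υ φ : List Sigma) (s : S) (θ θ' : Fin r → Sigma),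
      w = τ ++ υ ++ φ ∧ 0 < υ.length ∧ υ.length ≤ Fintype.card S ∧
      A.Steps c τ (s, θ) ∧ A.Steps (s, θ) υ (s, θ') ∧ A.Steps (s, θ') φ d := by
  obtain ⟨f, rfl, rfl, hf⟩ := h.exists_trace
  obtain ⟨i, j, hij, hj, hs⟩ := exists_lt_le_card_map_eq fun n => (f n).1
  have hjw : j ≤ w.length := hj.trans hw
  have hfj : f j = ((f i).1, (f j).2) := Prod.ext hs.symm rfl
  refine ⟨w.take i, (w.take j).drop i, w.drop j, (f i).1, (f i).2, (f j).2, ?_, ?_, ?_, ?_, ?_, ?_⟩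
  · calc
      w = w.take j ++ w.drop j := (List.take_append_drop j w).symm
      _ = (w.take j).take i ++ (w.take j).drop i ++ w.drop j := by
        rw [List.take_append_drop i (w.take j)]
      _ = w.take i ++ (w.take j).drop i ++ w.drop j := by rw [List.take_take, min_eq_left hij.le]
  · simp only [List.length_drop, List.length_take]
    omega
  · simp only [List.length_drop, List.length_take]
    omega
  · exact hf 0 i i.zero_le (hij.le.trans hjw)
  · rw [← hfj]
    exact hf i j hij.le hjw
  · rw [← hfj]
    simpa using hf j w.length hjw le_rfl

theorem Steps.iterate {s : S} {θ : Fin r → Sigma} {υ : List Sigma} {α : Equiv.Perm Sigma}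
    (h : A.Steps (s, θ) υ (s, α ∘ θ)) (hα : IsDeltaPerm A.Δ α) (k : ℕ) :
    A.Steps (s, θ) ((List.range k).flatMap fun i => υ.map ⇑(α ^ i)) (s, ⇑(α ^ k) ∘ θ) := by
  induction k with
  | zero => exact .nil _
  | succ k ih =>
    have hk : A.Steps (s, ⇑(α ^ k) ∘ θ) (υ.map ⇑(α ^ k)) (s, ⇑(α ^ (k + 1)) ∘ θ) := by
      simpa only [pow_succ, Equiv.Perm.coe_mul, Function.comp_assoc] using h.map (hα.pow k)
    simpa [List.range_succ] using ih.append hk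

theorem IsConfig.exists_isDeltaPerm (hc : A.IsConfig c) (hd : A.IsConfig d) :
    ∃ α : Equiv.Perm Sigma, IsDeltaPerm A.Δ α ∧ α ∘ c.2 = d.2 ∧
      orderOf α ∣ (2 * r).factorial := by
  obtain ⟨α, hcd, hfix, hord⟩ := exists_perm_comp_eq_of_injective hc.injective hd.injective
  refine ⟨α, fun δ hδ => hfix δ ?_, hcd, by simpa using hord⟩
  rintro (⟨i, rfl⟩ | ⟨i, rfl⟩)
  · exact hc.notMem i hδ
  · exact hd.notMem i hδ

end FMA

theorem fma_pumping_general {Sigma S : Type} [Fintype S] {r : ℕ}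
    (A : FMA Sigma S r) (ψ χ ω : List Sigma)
    (hmem : ψ ++ χ ++ ω ∈ A.Lang) (hlen : Fintype.card S ≤ χ.length) :
    ∃ (τ υ φ : List Sigma) (α : Equiv.Perm Sigma),
      χ = τ ++ υ ++ φ ∧ IsDeltaPerm A.Δ α ∧ orderOf α ∣ (2 * r).factorial ∧
      0 < υ.length ∧ υ.length ≤ Fintype.card S ∧
      (∀ k : ℕ, ψ ++ τ ++ υ ++ ((List.range k).flatMap fun i => υ.map ⇑(α ^ (i + 1))) ++
          ((φ ++ ω).map ⇑(α ^ k)) ∈ A.Lang) ∧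
      ψ ++ τ ++ ((φ ++ ω).map ⇑α⁻¹) ∈ A.Lang := by
  obtain ⟨f, hrun, hf⟩ := hmem
  obtain ⟨d, hψχ, hω⟩ := FMA.steps_append.mp hrun
  obtain ⟨c, hψ, hχ⟩ := FMA.steps_append.mp hψχ
  obtain ⟨τ, υ, φ, s, θ, θ', hdecomp, hpos, hle, hτ, hυ, hφ⟩ := hχ.exists_loop hlen
  have hpre : A.Steps (A.s0, A.θ0) (ψ ++ τ) (s, θ) := hψ.append hτ
  have hsuf : A.Steps (s, θ') (φ ++ ω) f := hφ.append hω
  have hθ : A.IsConfig (s, θ) := A.isConfig_init.steps hpre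
  obtain ⟨α, hα, rfl : α ∘ θ = θ', hord⟩ := hθ.exists_isDeltaPerm (hθ.steps hυ)
  refine ⟨τ, υ, φ, α, hdecomp, hα, hord, hpos, hle, fun k => ?_, ?_⟩
  · have hloop := hυ.iterate hα (k + 1)
    have hsuf' := hsuf.map (hα.pow k)
    rw [List.range_succ_eq_map, pow_succ, Equiv.Perm.coe_mul] at hloop
    refine ⟨(f.1, ⇑(α ^ k) ∘ f.2), ?_, hf⟩
    simpa [List.flatMap_map] using (hpre.append hloop).append hsuf'
  · have hsuf' : A.Steps (s, θ) ((φ ++ ω).map ⇑α⁻¹) (f.1, ⇑α⁻¹ ∘ f.2) := by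
      simpa [← Function.comp_assoc] using hsuf.map hα.inv
    exact ⟨_, hpre.append hsuf', hf⟩

/-- Pumping lemma for `r`-register finite-memory automata
(Theorem `Pumping_Lemma_2`): every subword `χ` of an accepted word `ψχω`
with `|χ| > card S` can be decomposed as `χ = τυφ` and pumped by a
`Δ`-permutation `α` of order at most `(2r)!`. -/
theorem fma_pumping {Sigma S : Type} [Infinite Sigma] [Fintype S] {r : ℕ}
    (A : FMA Sigma S r) (ψ χ ω : List Sigma)
    (hmem : ψ ++ χ ++ ω ∈ A.Lang) (hlen : Fintype.card S < χ.length) :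
    ∃ (τ υ φ : List Sigma) (α : Equiv.Perm Sigma),
      χ = τ ++ υ ++ φ ∧ IsDeltaPerm A.Δ α ∧
      0 < orderOf α ∧ orderOf α ≤ (2 * r).factorial ∧
      0 < υ.length ∧ υ.length ≤ Fintype.card S ∧
      (∀ k : ℕ, 1 ≤ k →
        ψ ++ τ ++ υ ++ ((List.range k).flatMap fun i => υ.map ⇑(α ^ (i + 1))) ++
          ((φ ++ ω).map ⇑(α ^ k)) ∈ A.Lang) ∧
      ψ ++ τ ++ ((φ ++ ω).map ⇑α⁻¹) ∈ A.Lang := by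
  obtain ⟨τ, υ, φ, α, hχ, hα, hord, hpos, hle, hpump, hskip⟩ :=
    fma_pumping_general A ψ χ ω hmem hlen.le
  exact ⟨τ, υ, φ, α, hχ, hα, Nat.pos_of_dvd_of_pos hord (Nat.factorial_pos _),
    Nat.le_of_dvd (Nat.factorial_pos _) hord, hpos, hle, fun k _ => hpump k, hskip⟩
end

section
/- If L is an unbounded quasi-regular language over an infinite alphabet Σ, then there exist words σ′, σ″, σ‴ over Σ with σ″ nonempty such that σ′ (σ″)^k σ‴ ∈ L for every k = 0,1,2,…. -/
/-! Only equality with the registers and membership in `Δ` matter to the automaton, so whether a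
transition can be taken depends on the state alone, as long as a fresh letter is available. Hence
over a finite `D` containing `Δ` and the initial registers, with more than `#Δ + r` letters, every
accepted word can be replaced by an accepted word of the same length over `D`. The accepted words
over `D` form a regular language, since only finitely many configurations occur in runs over `D`,
and the pumping lemma applies to it. -/

theorem card_union_image_univ_le {α ι : Type*} [DecidableEq α] [Fintype ι]
    (s : Finset α) (f : ι → α) :
    (s ∪ Finset.univ.image f).card ≤ s.card + Fintype.card ι :=
  (Finset.card_union_le _ _).trans (Nat.add_le_add_left Finset.card_image_le _)

theorem exists_mem_notMem_forall_ne {α ι : Type*} [Fintype ι] {s t : Finset α}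
    (hcard : s.card + Fintype.card ι < t.card) (f : ι → α) :
    ∃ a ∈ t, a ∉ s ∧ ∀ i, a ≠ f i := by
  classical
  obtain ⟨a, hat, ha⟩ :=
    Finset.exists_mem_notMem_of_card_lt_card ((card_union_image_univ_le s f).trans_lt hcard)
  simp only [Finset.mem_union, Finset.mem_image, Finset.mem_univ, true_and, not_or,
    not_exists] at ha
  exact ⟨a, hat, ha.1, fun i h => ha.2 i h.symm⟩

theorem exists_pumping_length_of_isRegular {α : Type*} {L : Language α} (hL : L.IsRegular) :
    ∃ n : ℕ, ∀ w ∈ L, n ≤ w.length → ∃ x y z : List α, y ≠ [] ∧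
      ∀ k : ℕ, x ++ (List.replicate k y).flatten ++ z ∈ L := by
  obtain ⟨σ, _, M, rfl⟩ := hL
  refine ⟨Fintype.card σ, fun w hw hlen => ?_⟩
  obtain ⟨x, y, z, -, -, hy, hpump⟩ := M.pumping_lemma hw hlen
  refine ⟨x, y, z, hy, fun k => hpump ?_⟩
  have hyk : (List.replicate k y).flatten ∈ KStar.kstar ({y} : Language α) :=
    Language.join_mem_kstar fun u hu => List.eq_of_mem_replicate hu
  exact Language.append_mem_mul (Language.append_mem_mul rfl hyk) rfl

namespace FMA

variable {Sigma S : Type} {r : ℕ} {A : FMA Sigma S r} {D : Finset Sigma}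

theorem steps_nil_iff {c c' : S × (Fin r → Sigma)} : A.Steps c [] c' ↔ c = c' :=
  ⟨fun h => by cases h; rfl, fun h => h ▸ .nil c⟩

theorem steps_cons_iff {c c'' : S × (Fin r → Sigma)} {σ : Sigma} {w : List Sigma} :
    A.Steps c (σ :: w) c'' ↔ ∃ c', A.Step c σ c' ∧ A.Steps c' w c'' :=
  ⟨fun h => by cases h with | cons hstep hsteps => exact ⟨_, hstep, hsteps⟩,
    fun ⟨_, hstep, hsteps⟩ => .cons hstep hsteps⟩

/-- A configuration whose registers hold letters of `D`, seen as a configuration over the whole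
alphabet. -/
def embed (c : S × (Fin r → D)) : S × (Fin r → Sigma) :=
  (c.1, Subtype.val ∘ c.2)

/-- The accepted words all of whose letters lie in `D`, as a language over the subtype `D`; this is
the regular language to which the pumping lemma is applied. -/
def langOver (A : FMA Sigma S r) (D : Finset Sigma) : Language D :=
  {v | v.map Subtype.val ∈ A.Lang}

/-- The automaton `A` with both the input and the registers confined to the finite alphabet `D`,
as an ordinary nondeterministic automaton whose states are the configurations over `D`. There is
no initial state when some letter of `θ0` is outside `D`. -/
def restrict (A : FMA Sigma S r) (D : Finset Sigma) : NFA D (S × (Fin r → D)) where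
  step c σ := {c' | A.Step (embed c) σ (embed c')}
  start := {c | embed c = (A.s0, A.θ0)}
  accept := {c | c.1 ∈ A.F}

theorem Step.snd_eq_or_eq_update {c c' : S × (Fin r → Sigma)} {σ : Sigma} (h : A.Step c σ c') :
    c'.2 = c.2 ∨ ∃ i, c'.2 = Function.update c.2 i σ := by
  rcases h with ⟨_, _, hkeep⟩ | ⟨_, _, _, hkeep⟩ | ⟨_, _, ⟨_, hkeep⟩ | ⟨i, _, hupdate⟩⟩
  exacts [.inl hkeep, .inl hkeep, .inl hkeep, .inr ⟨i, hupdate⟩]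

theorem step_embed_iff {c : S × (Fin r → D)} {σ : D} {e : S × (Fin r → Sigma)} :
    A.Step (embed c) σ e ↔ ∃ d ∈ (A.restrict D).step c σ, embed d = e := by
  refine ⟨fun h => ?_, fun ⟨_, hd, hde⟩ => hde ▸ hd⟩
  obtain ⟨θ, hθ⟩ : ∃ θ : Fin r → D, Subtype.val ∘ θ = e.2 := by
    rcases h.snd_eq_or_eq_update with hkeep | ⟨i, hupdate⟩
    · exact ⟨c.2, hkeep.symm⟩
    · exact ⟨Function.update c.2 i σ, (Function.comp_update _ _ _ _).trans hupdate.symm⟩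
  have hde : embed (e.1, θ) = e := Prod.ext rfl hθ
  exact ⟨(e.1, θ), hde.symm ▸ h, hde⟩

theorem steps_embed_iff {v : List D} {c : S × (Fin r → D)} {e : S × (Fin r → Sigma)} :
    A.Steps (embed c) (v.map Subtype.val) e ↔
      ∃ d ∈ (A.restrict D).evalFrom {c} v, embed d = e := by
  induction v generalizing c with
  | nil => simp [steps_nil_iff]
  | cons a v ih =>
    simp only [List.map_cons, steps_cons_iff, step_embed_iff, NFA.evalFrom_cons,
      NFA.stepSet_singleton, NFA.mem_evalFrom_iff_exists (S := NFA.step _ _ _)]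
    constructor
    · rintro ⟨_, ⟨c', hc', rfl⟩, hsteps⟩
      obtain ⟨d, hd, rfl⟩ := ih.1 hsteps
      exact ⟨d, ⟨c', hc', hd⟩, rfl⟩
    · rintro ⟨d, ⟨c', hc', hd⟩, rfl⟩
      exact ⟨embed c', ⟨c', hc', rfl⟩, ih.2 ⟨d, hd, rfl⟩⟩

theorem accepts_restrict (hθ : ∀ i, A.θ0 i ∈ D) : (A.restrict D).accepts = A.langOver D := by
  ext v
  simp only [NFA.mem_accepts, NFA.mem_evalFrom_iff_exists (S := (A.restrict D).start)]
  constructor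
  · rintro ⟨d, hdF, c, hc, hd⟩
    exact ⟨embed d, hc ▸ steps_embed_iff.2 ⟨d, hd, rfl⟩, hdF⟩
  · rintro ⟨_, hsteps, hF⟩
    obtain ⟨d, hd, rfl⟩ := steps_embed_iff (c := (A.s0, fun i => ⟨A.θ0 i, hθ i⟩)) |>.1 hsteps
    exact ⟨d, hF, _, rfl, hd⟩

theorem isRegular_langOver [Finite S] (hθ : ∀ i, A.θ0 i ∈ D) : (A.langOver D).IsRegular :=
  ⟨_, Fintype.ofFinite _, (A.restrict D).toDFA,
    NFA.toDFA_correct.trans (accepts_restrict hθ)⟩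

theorem Step.exists_step_embed (hΔ : A.Δ ⊆ D) (hcard : A.Δ.card + r < D.card)
    {c c' : S × (Fin r → Sigma)} {σ : Sigma} (h : A.Step c σ c') (θ : Fin r → D) :
    ∃ (a : D) (θ' : Fin r → D), A.Step (embed (c.1, θ)) a (embed (c'.1, θ')) := by
  obtain ⟨a, haD, haΔ, haθ⟩ := exists_mem_notMem_forall_ne
    (by rwa [Fintype.card_fin]) (Subtype.val ∘ θ : Fin r → Sigma)
  rcases h with ⟨hσ, hs, _⟩ | ⟨i, _, hs, _⟩ | ⟨_, _, ⟨hs, _⟩ | ⟨i, hs, _⟩⟩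
  · exact ⟨⟨σ, hΔ hσ⟩, θ, .inl ⟨hσ, hs, rfl⟩⟩
  · exact ⟨θ i, θ, .inr (.inl ⟨i, rfl, hs, rfl⟩)⟩
  · exact ⟨⟨a, haD⟩, θ, .inr (.inr ⟨haΔ, haθ, .inl ⟨hs, rfl⟩⟩)⟩
  · exact ⟨⟨a, haD⟩, Function.update θ i ⟨a, haD⟩,
      .inr (.inr ⟨haΔ, haθ, .inr ⟨i, hs, Function.comp_update Subtype.val _ _ _⟩⟩)⟩

theorem Steps.exists_steps_embed (hΔ : A.Δ ⊆ D) (hcard : A.Δ.card + r < D.card)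
    {c c' : S × (Fin r → Sigma)} {w : List Sigma} (h : A.Steps c w c') (θ : Fin r → D) :
    ∃ (v : List D) (θ' : Fin r → D), v.length = w.length ∧
      A.Steps (embed (c.1, θ)) (v.map Subtype.val) (embed (c'.1, θ')) := by
  induction h generalizing θ with
  | nil c => exact ⟨[], θ, rfl, .nil _⟩
  | cons hstep _ ih =>
    obtain ⟨a, η, ha⟩ := hstep.exists_step_embed hΔ hcard θ
    obtain ⟨v, θ', hlen, hv⟩ := ih η
    exact ⟨a :: v, θ', congrArg Nat.succ hlen, .cons ha hv⟩

theorem exists_mem_langOver_length_eq (hΔ : A.Δ ⊆ D) (hθ : ∀ i, A.θ0 i ∈ D)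
    (hcard : A.Δ.card + r < D.card) {w : List Sigma} (hw : w ∈ A.Lang) :
    ∃ v ∈ A.langOver D, v.length = w.length := by
  obtain ⟨c, hsteps, hF⟩ := hw
  obtain ⟨v, θ', hlen, hv⟩ := hsteps.exists_steps_embed hΔ hcard fun i => ⟨A.θ0 i, hθ i⟩
  exact ⟨v, ⟨_, hv, hF⟩, hlen⟩

theorem exists_finset_subset_mem_card_lt [Infinite Sigma] (A : FMA Sigma S r) :
    ∃ D : Finset Sigma, A.Δ ⊆ D ∧ (∀ i, A.θ0 i ∈ D) ∧ A.Δ.card + r < D.card := by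
  classical
  have hle : (A.Δ ∪ Finset.univ.image A.θ0).card ≤ A.Δ.card + r := by
    simpa using card_union_image_univ_le A.Δ A.θ0
  obtain ⟨D, hsub, hcard⟩ := Infinite.exists_superset_card_eq _ _ (Nat.le_succ_of_le hle)
  exact ⟨D, Finset.union_subset_left hsub,
    fun i => hsub (Finset.mem_union_right _ (Finset.mem_image_of_mem _ (Finset.mem_univ i))),
    hcard ▸ Nat.lt_succ_self _⟩

end FMA

/-- Periodicity in unbounded quasi-regular languages: if `L` is accepted by some
finite-memory automaton and contains arbitrarily long words, then some word of
the form `σ' (σ'')^k σ'''` with `σ''` nonempty lies in `L` for every `k`. -/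
theorem quasi_regular_periodicity {Sigma : Type} [Infinite Sigma]
    (L : Set (List Sigma))
    (hqr : ∃ (S : Type) (_ : Fintype S) (r : ℕ) (A : FMA Sigma S r), A.Lang = L)
    (hub : ∀ n : ℕ, ∃ w ∈ L, n < w.length) :
    ∃ σ' σ'' σ''' : List Sigma, σ'' ≠ [] ∧
      ∀ k : ℕ, σ' ++ (List.replicate k σ'').flatten ++ σ''' ∈ L := by
  obtain ⟨S, _, r, A, rfl⟩ := hqr
  obtain ⟨D, hΔ, hθ, hcard⟩ := A.exists_finset_subset_mem_card_lt
  obtain ⟨n, hn⟩ := exists_pumping_length_of_isRegular (FMA.isRegular_langOver hθ)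
  obtain ⟨w, hw, hlong⟩ := hub n
  obtain ⟨v, hv, hlen⟩ := FMA.exists_mem_langOver_length_eq hΔ hθ hcard hw
  obtain ⟨x, y, z, hy, hpump⟩ := hn v hv (hlen ▸ hlong.le)
  refine ⟨x.map Subtype.val, y.map Subtype.val, z.map Subtype.val,
    mt List.map_eq_nil_iff.1 hy, fun k => ?_⟩
  have hmem : (x ++ (List.replicate k y).flatten ++ z).map Subtype.val ∈ A.Lang := hpump k
  simpa only [List.map_append, List.map_flatten, List.map_replicate] using hmem
end

section
/- Let A be a one-register alternating finite-memory automaton over an infinite alphabet Σ with distinguished letters Δ. Let σ = τυφ with |υ| > 0, and let C_0, C_{|τ|}, C_{|τυ|}, C_{|τυφ|} be finite sets of configurations with C_0 →τ C_{|τ|} →υ C_{|τυ|} →φ C_{|τυφ|}. Let α be a Δ-permutation of Σ and Σ′ ⊆ Σ be such that: C_{|τυ|}, α(Σ′) ⪯_α C_{|τ|}, Σ′; α(Σ′) ⊆ Σ′; and [υφ] ⊆ Σ′. Then there exist finite sets of configurations D and E such that C_{|τυ|} →α(υ) D →α(φ) E, with D, α(Σ′) ⪯_α C_{|τυ|}, Σ′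 and E, α(Σ′) ⪯_α C_{|τυφ|}, Σ′. -/
/-- A one-register alternating finite-memory automaton over the alphabet `Sigma`,
with states `S`. -/
structure AFMA (Sigma : Type) (S : Type) where
  s0 : S
  F : Set S
  Δ : Finset Sigma
  θ0 : Sigma
  θ0_notin : θ0 ∉ Δ
  μΔ : S → Sigma → Set (Set S)
  μeq : S → Set (Set S)
  μne : S → Set (Set S × Set S)

namespace AFMA

variable {Sigma S : Type}

open Classical

/-- The induced transition function `μ^c` on a configuration `c` and a letter `σ`:
a set of sets of configurations. -/
noncomputable def muC (A : AFMA Sigma S) (c : S × Sigma) (σ : Sigma) : Set (Set (S × Sigma)) :=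
  if σ ∈ A.Δ then {D | ∃ Q ∈ A.μΔ c.1 σ, D = Q ×ˢ ({c.2} : Set Sigma)}
  else if σ = c.2 then {D | ∃ Q ∈ A.μeq c.1, D = Q ×ˢ ({c.2} : Set Sigma)}
  else {D | ∃ p ∈ A.μne c.1, D = p.1 ×ˢ ({c.2} : Set Sigma) ∪ p.2 ×ˢ ({σ} : Set Sigma)}

/-- `SetStep A C σ C'` : `C' ∈ μ^c(C, σ)`, i.e. `C'` is a union, over all `c ∈ C`,
of chosen elements of `μ^c(c, σ)`. -/
def SetStep (A : AFMA Sigma S) (C : Set (S × Sigma)) (σ : Sigma)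
    (C' : Set (S × Sigma)) : Prop :=
  ∃ g : S × Sigma → Set (S × Sigma),
    (∀ c ∈ C, g c ∈ A.muC c σ) ∧ C' = ⋃ c ∈ C, g c

/-- `Steps A C w C'` : reading the word `w` from the configuration set `C`
the automaton can reach the configuration set `C'`. -/
inductive Steps (A : AFMA Sigma S) :
    Set (S × Sigma) → List Sigma → Set (S × Sigma) → Prop
  | nil (C) : Steps A C [] C
  | cons {C C' C'' σ w} : A.SetStep C σ C' → Steps A C' w C'' → Steps A C (σ :: w) C''

/-- A set of configurations is accepting if all its states are accepting. -/
def Accepting (A : AFMA Sigma S) (C : Set (S × Sigma)) : Prop :=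
  ∀ c ∈ C, c.1 ∈ A.F

/-- The language accepted by `A`. -/
def Lang (A : AFMA Sigma S) : Set (List Sigma) :=
  {w | ∃ C, A.Steps {(A.s0, A.θ0)} w C ∧ A.Accepting C}

/-- The action of a permutation of the alphabet on a set of configurations. -/
def mapConfigs (α : Equiv.Perm Sigma) (C : Set (S × Sigma)) : Set (S × Sigma) :=
  (fun c => (c.1, α c.2)) '' C

end AFMA

namespace AFMA

variable {Sigma S : Type}

/-- `Σ(C)` : the set of (non-distinguished) letters occurring in configurations of `C`. -/
def lettersOf (Δ : Finset Sigma) (C : Set (S × Sigma)) : Set Sigma :=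
  {σ | σ ∉ Δ ∧ ∃ s, (s, σ) ∈ C}

/-- `S^σ(C)` : the states paired with the letter `σ` in `C`. -/
def statesAt (C : Set (S × Sigma)) (σ : Sigma) : Set S :=
  {s | (s, σ) ∈ C}

/-- `S^{Γ}(C)` : the states paired with some letter of `Γ` in `C`. -/
def statesOn (C : Set (S × Sigma)) (Γ : Set Sigma) : Set S :=
  ⋃ σ ∈ Γ, statesAt C σ

/-- `Σ^Q(C)` : the letters `σ` with `S^σ(C) = Q`. -/
def lettersWith (C : Set (S × Sigma)) (Q : Set S) : Set Sigma :=
  {σ | statesAt C σ = Q}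

/-- The relation `C1,Γ1 ⪯_α C2,Γ2`. -/
def Preceq (Δ : Finset Sigma) (α : Equiv.Perm Sigma)
    (C1 : Set (S × Sigma)) (Γ1 : Set Sigma)
    (C2 : Set (S × Sigma)) (Γ2 : Set Sigma) : Prop :=
  Γ1 ⊆ ⇑α '' Γ2 ∧
  (⇑α '' Γ2) ∩ lettersOf Δ C1 ⊆ Γ1 ∧
  (∀ σ ∈ Γ1, statesAt C1 σ ⊆ statesAt C2 (α⁻¹ σ)) ∧
  statesOn C1 Γ1ᶜ ⊆ statesOn C2 Γ2ᶜ

end AFMA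

/-- The `k`-fold pumping `τ υ α(υ) α²(υ) ⋯ α^k(υ) α^k(φ)` of the decomposition
`τ ++ υ ++ φ` by the permutation `α`. -/
def pumpedWord {Sigma : Type} (α : Equiv.Perm Sigma) (τ υ φ : List Sigma) (k : ℕ) :
    List Sigma :=
  τ ++ υ ++ ((List.range k).flatMap fun i => υ.map ⇑(α ^ (i + 1))) ++ φ.map ⇑(α ^ k)

/-!
On reading a letter `σ ∈ Γ`, a configuration consults its register only to test it against `σ`.
Hence a register `x` read along `α(w)` and a register `y` read along `w ∈ Γ*` evolve in parallel
as soon as the tests `α σ = x` and `σ = y` agree for all `σ ∈ Γ`. The relation `C', α(Γ) ⪯_α C, Γ`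
says exactly that each configuration of `C'` has such a partner in `C`, so it is preserved when a
run from `C` is copied, choice by choice, to a run from `C'`.
-/

theorem IsDeltaPerm.apply_mem_iff_s7 {Sigma : Type} {Δ : Finset Sigma} {α : Equiv.Perm Sigma}
    (hα : IsDeltaPerm Δ α) {σ : Sigma} : α σ ∈ Δ ↔ σ ∈ Δ := by
  refine ⟨fun h => ?_, fun h => (hα σ h).symm ▸ h⟩
  rwa [← α.injective (hα _ h)]

namespace AFMA

variable {Sigma S : Type} {α : Equiv.Perm Sigma} {Γ : Set Sigma}

/-- The register contents `x` and `y` pass the same equality tests, when the letters of `Γ` are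
read through `α` for `x` and as they are for `y`. Equivalently, either `y ∈ Γ` and `x = α y`, or
`y ∉ Γ` and `x ∉ α(Γ)`. -/
def RegistersMatch (α : Equiv.Perm Sigma) (Γ : Set Sigma) (x y : Sigma) : Prop :=
  ∀ σ ∈ Γ, α σ = x ↔ σ = y

theorem registersMatch_apply (α : Equiv.Perm Sigma) (Γ : Set Sigma) (y : Sigma) :
    RegistersMatch α Γ (α y) y :=
  fun _ _ => α.apply_eq_iff_eq

theorem registersMatch_of_notMem {x y : Sigma} (hx : x ∉ α '' Γ) (hy : y ∉ Γ) :
    RegistersMatch α Γ x y :=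
  fun σ hσ => iff_of_false (fun h => hx ⟨σ, hσ, h⟩) (fun h => hy (h ▸ hσ))

/-- Every configuration of `C'` has a partner in `C` with the same state and a matching register:
the invariant of the simulation, a pointwise form of `C', α(Γ) ⪯_α C, Γ`. -/
def CoveredBy (α : Equiv.Perm Sigma) (Γ : Set Sigma) (C' C : Set (S × Sigma)) : Prop :=
  ∀ ⦃s x⦄, (s, x) ∈ C' → ∃ y, (s, y) ∈ C ∧ RegistersMatch α Γ x y

theorem mem_statesOn {C : Set (S × Sigma)} {s : S} :
    s ∈ statesOn C Γ ↔ ∃ σ ∈ Γ, (s, σ) ∈ C := by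
  simp [statesOn, statesAt]

theorem Preceq.coveredBy {Δ : Finset Sigma} {C' C : Set (S × Sigma)}
    (h : Preceq Δ α C' (α '' Γ) C Γ) : CoveredBy α Γ C' C := by
  obtain ⟨-, -, hin, hout⟩ := h
  intro s x hsx
  by_cases hx : x ∈ α '' Γ
  · obtain ⟨y, hy, rfl⟩ := hx
    have hsy : s ∈ statesAt C (α⁻¹ (α y)) := hin _ ⟨y, hy, rfl⟩ hsx
    rw [Equiv.Perm.inv_def, Equiv.symm_apply_apply] at hsy
    exact ⟨y, hsy, registersMatch_apply α Γ y⟩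
  · obtain ⟨y, hy, hsy⟩ := mem_statesOn.1 (hout (mem_statesOn.2 ⟨x, hx, hsx⟩))
    exact ⟨y, hsy, registersMatch_of_notMem hx hy⟩

namespace CoveredBy

variable {C' C : Set (S × Sigma)}

theorem preceq (Δ : Finset Sigma) (h : CoveredBy α Γ C' C) :
    Preceq Δ α C' (α '' Γ) C Γ := by
  refine ⟨subset_rfl, Set.inter_subset_left, ?_, fun s hs => ?_⟩
  · rintro _ ⟨σ, hσ, rfl⟩ s hs
    obtain ⟨y, hsy, hmatch⟩ := h hs
    obtain rfl : σ = y := (hmatch σ hσ).1 rfl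
    rwa [Equiv.Perm.inv_def, Equiv.symm_apply_apply]
  · obtain ⟨x, hx, hsx⟩ := mem_statesOn.1 hs
    obtain ⟨y, hsy, hmatch⟩ := h hsx
    exact mem_statesOn.2 ⟨y, fun hy => hx ⟨y, hy, (hmatch y hy).2 rfl⟩, hsy⟩

theorem mono_right {D : Set (S × Sigma)} (h : CoveredBy α Γ C' C) (hCD : C ⊆ D) :
    CoveredBy α Γ C' D :=
  fun _ _ hsx => (h hsx).imp fun _ hy => hy.imp_left fun hsy => hCD hsy

theorem union {D' D : Set (S × Sigma)} (hC : CoveredBy α Γ C' C) (hD : CoveredBy α Γ D' D) :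
    CoveredBy α Γ (C' ∪ D') (C ∪ D) := by
  rintro s x (hsx | hsx)
  · exact hC.mono_right Set.subset_union_left hsx
  · exact hD.mono_right Set.subset_union_right hsx

theorem biUnion_left {ι : Type*} {I : Set ι} {g : ι → Set (S × Sigma)}
    (h : ∀ i ∈ I, CoveredBy α Γ (g i) C) : CoveredBy α Γ (⋃ i ∈ I, g i) C := by
  intro s x hsx
  obtain ⟨i, hi, hsx⟩ := Set.mem_iUnion₂.1 hsx
  exact h i hi hsx

end CoveredBy

theorem RegistersMatch.coveredBy_prod {x y : Sigma} (h : RegistersMatch α Γ x y) (Q : Set S) :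
    CoveredBy α Γ (Q ×ˢ {x}) (Q ×ˢ {y}) := by
  rintro s _ ⟨hs, rfl⟩
  exact ⟨y, ⟨hs, rfl⟩, h⟩

variable {A : AFMA Sigma S}

theorem RegistersMatch.exists_mem_muC (hα : IsDeltaPerm A.Δ α) {x y σ : Sigma}
    (h : RegistersMatch α Γ x y) (hσ : σ ∈ Γ) {s : S} {G : Set (S × Sigma)}
    (hG : G ∈ A.muC (s, y) σ) : ∃ G' ∈ A.muC (s, x) (α σ), CoveredBy α Γ G' G := by
  classical
  simp only [muC, hα.apply_mem_iff_s7, h σ hσ] at hG ⊢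
  split_ifs at hG ⊢ with hΔ
  · obtain ⟨Q, hQ, rfl⟩ := hG
    exact ⟨_, ⟨Q, (hα σ hΔ).symm ▸ hQ, rfl⟩, h.coveredBy_prod Q⟩
  · obtain ⟨Q, hQ, rfl⟩ := hG
    exact ⟨_, ⟨Q, hQ, rfl⟩, h.coveredBy_prod Q⟩
  · obtain ⟨p, hp, rfl⟩ := hG
    exact ⟨_, ⟨p, hp, rfl⟩,
      (h.coveredBy_prod p.1).union ((registersMatch_apply α Γ σ).coveredBy_prod p.2)⟩

theorem SetStep.exists_coveredBy (hα : IsDeltaPerm A.Δ α) {C' C D : Set (S × Sigma)} {σ : Sigma}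
    (hstep : A.SetStep C σ D) (hσ : σ ∈ Γ) (hC : CoveredBy α Γ C' C) :
    ∃ D', A.SetStep C' (α σ) D' ∧ CoveredBy α Γ D' D := by
  obtain ⟨g, hg, rfl⟩ := hstep
  have hchoice : ∀ c ∈ C', ∃ G' ∈ A.muC c (α σ), CoveredBy α Γ G' (⋃ c ∈ C, g c) := by
    rintro ⟨s, x⟩ hsx
    obtain ⟨y, hsy, hmatch⟩ := hC hsx
    obtain ⟨G', hG', hcov⟩ := hmatch.exists_mem_muC hα hσ (hg _ hsy)
    exact ⟨G', hG', hcov.mono_right (Set.subset_biUnion_of_mem hsy)⟩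
  choose! g' hg' hcov using hchoice
  exact ⟨_, ⟨g', hg', rfl⟩, CoveredBy.biUnion_left hcov⟩

theorem Steps.exists_coveredBy (hα : IsDeltaPerm A.Δ α) {C' C D : Set (S × Sigma)}
    {w : List Sigma} (hsteps : A.Steps C w D) (hw : ∀ σ ∈ w, σ ∈ Γ) (hC : CoveredBy α Γ C' C) :
    ∃ D', A.Steps C' (w.map α) D' ∧ CoveredBy α Γ D' D := by
  induction hsteps generalizing C' with
  | nil => exact ⟨C', .nil C', hC⟩
  | cons hstep _ ih =>
    rw [List.forall_mem_cons] at hw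
    obtain ⟨M', hstep', hM⟩ := hstep.exists_coveredBy hα hw.1 hC
    obtain ⟨D', hsteps', hD⟩ := ih hw.2 hM
    exact ⟨D', .cons hstep' hsteps', hD⟩

end AFMA

theorem afma_sufficient_one_step_general {Sigma S : Type} {A : AFMA Sigma S} {υ φ : List Sigma}
    {C C1 C2 C3 : Set (S × Sigma)} (hυ : A.Steps C1 υ C2) (hφ : A.Steps C2 φ C3)
    {α : Equiv.Perm Sigma} (hα : IsDeltaPerm A.Δ α) {Γ : Set Sigma}
    (hpre : AFMA.Preceq A.Δ α C (⇑α '' Γ) C1 Γ) (hletters : ∀ x ∈ υ ++ φ, x ∈ Γ) :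
    ∃ D E : Set (S × Sigma),
      A.Steps C (υ.map ⇑α) D ∧ A.Steps D (φ.map ⇑α) E ∧
      AFMA.Preceq A.Δ α D (⇑α '' Γ) C2 Γ ∧
      AFMA.Preceq A.Δ α E (⇑α '' Γ) C3 Γ := by
  obtain ⟨hυΓ, hφΓ⟩ := List.forall_mem_append.1 hletters
  obtain ⟨D, hCD, hD⟩ := hυ.exists_coveredBy hα hυΓ hpre.coveredBy
  obtain ⟨E, hDE, hE⟩ := hφ.exists_coveredBy hα hφΓ hD
  exact ⟨D, E, hCD, hDE, hD.preceq A.Δ, hE.preceq A.Δ⟩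

/-- Proposition (sufficient condition), one step of pumping: under the hypotheses
`C_{|τυ|}, α(Γ) ⪯_α C_{|τ|}, Γ`, `α(Γ) ⊆ Γ`, `[υφ] ⊆ Γ`, there are configuration
sets `D`, `E` with `C_{|τυ|} →α(υ) D →α(φ) E`, `D, α(Γ) ⪯_α C_{|τυ|}, Γ` and
`E, α(Γ) ⪯_α C_{|τυφ|}, Γ`. -/
theorem afma_sufficient_one_step {Sigma S : Type} [Infinite Sigma] [Fintype S]
    (A : AFMA Sigma S) (τ υ φ : List Sigma) (hυ : υ ≠ [])
    (C0 C1 C2 C3 : Set (S × Sigma))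
    (hf0 : C0.Finite) (hf1 : C1.Finite) (hf2 : C2.Finite) (hf3 : C3.Finite)
    (hτ : A.Steps C0 τ C1) (hυs : A.Steps C1 υ C2) (hφ : A.Steps C2 φ C3)
    (α : Equiv.Perm Sigma) (hα : IsDeltaPerm A.Δ α) (Γ : Set Sigma)
    (hpre : AFMA.Preceq A.Δ α C2 (⇑α '' Γ) C1 Γ)
    (hsub : ⇑α '' Γ ⊆ Γ)
    (hletters : ∀ x ∈ υ ++ φ, x ∈ Γ) :
    ∃ D E : Set (S × Sigma),
      A.Steps C2 (υ.map ⇑α) D ∧ A.Steps D (φ.map ⇑α) E ∧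
      AFMA.Preceq A.Δ α D (⇑α '' Γ) C2 Γ ∧
      AFMA.Preceq A.Δ α E (⇑α '' Γ) C3 Γ :=
  afma_sufficient_one_step_general hυs hφ hα hpre hletters
end

section
/- Fix a finite set S. There exists a positive integer N such that every trace reversal resembling sequence over S of length greater than N is N-extendable; that is, for every sequence (Q_0,f_0), (Q_1,f_1), …, (Q_m,f_m) with m > N, where each Q_i ⊆ S and each f_i is a function from the nonempty subsets of S to {0,1,…,i}, there exist indices i < j < N with Q_i = Q_j and f_i(Q) ≤ f_j(Q) for every nonempty Q ⊆ S. -/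
/-!
This is a uniform form of Dickson's lemma, obtained by compactness. Give the alphabet the discrete
topology. For a well quasi-order, the sequences with an increasing pair below `N` form open sets,
growing with `N`, that cover the whole sequence space. Sequences whose `i`-th term lies in a
prescribed finite set form a compact set by Tychonoff's theorem, so one `N` serves them all.
-/

open Set

theorem exists_length_bound_of_isCompact {α : Type*} [TopologicalSpace α] [DiscreteTopology α]
    {r : α → α → Prop} (hr : WellQuasiOrdered r) {K : Set (ℕ → α)} (hK : IsCompact K) :
    ∃ N : ℕ, ∀ x ∈ K, ∃ i j, i < j ∧ j < N ∧ r (x i) (x j) := by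
  let U (N : ℕ) : Set (ℕ → α) := {x | ∃ i j, i < j ∧ j < N ∧ r (x i) (x j)}
  have isOpen_U (N : ℕ) : IsOpen (U N) := by
    have isOpen_pair (i j : ℕ) : IsOpen {x : ℕ → α | r (x i) (x j)} :=
      have continuous_pair : Continuous fun x : ℕ → α => (x i, x j) := by fun_prop
      (isOpen_discrete {p : α × α | r p.1 p.2}).preimage continuous_pair
    simp only [U, ofPred_exists, ofPred_and]
    exact isOpen_iUnion fun i => isOpen_iUnion fun j =>
      isOpen_const.inter (isOpen_const.inter (isOpen_pair i j))
  have cover : K ⊆ ⋃ N, U N := fun x _ =>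
    let ⟨i, j, hij, h⟩ := hr x
    mem_iUnion.2 ⟨j + 1, i, j, hij, j.lt_succ_self, h⟩
  have monotone_U : Monotone U := fun _ _ hMN _ ⟨i, j, hij, hj, h⟩ =>
    ⟨i, j, hij, hj.trans_le hMN, h⟩
  exact hK.elim_directed_cover U isOpen_U cover monotone_U.directed_le

theorem exists_length_bound_of_finite {α : Type*} {r : α → α → Prop} (hr : WellQuasiOrdered r)
    {A : ℕ → Set α} (hA : ∀ i, (A i).Finite) :
    ∃ N : ℕ, ∀ x : ℕ → α, (∀ i < N, x i ∈ A i) → ∃ i j, i < j ∧ j < N ∧ r (x i) (x j) := by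
  rcases isEmpty_or_nonempty α with _ | ⟨⟨a⟩⟩
  · exact ⟨0, fun x => isEmptyElim (x 0)⟩
  let : TopologicalSpace α := ⊥
  have : DiscreteTopology α := ⟨rfl⟩
  -- Adjoining `a` to each `A i` lets a finite sequence be continued to an infinite one.
  have hK : IsCompact (univ.pi fun i => insert a (A i)) :=
    isCompact_univ_pi fun i => ((hA i).insert a).isCompact
  obtain ⟨N, hN⟩ := exists_length_bound_of_isCompact hr hK
  refine ⟨N, fun x hx => ?_⟩
  let y (i : ℕ) : α := if i < N then x i else a
  have hy : y ∈ univ.pi fun i => insert a (A i) := by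
    intro i _
    by_cases hi : i < N
    · simpa only [y, if_pos hi] using mem_insert_of_mem a (hx i hi)
    · simp only [y, if_neg hi, mem_insert_iff, true_or]
  obtain ⟨i, j, hij, hj, h⟩ := hN y hy
  refine ⟨i, j, hij, hj, ?_⟩
  simpa only [y, if_pos hj, if_pos (hij.trans hj)] using h

theorem trace_reversal_extendable_general {σ ι : Type*} [Finite σ] [Finite ι] (b : ℕ → ι → ℕ) :
    ∃ N : ℕ, 0 < N ∧ ∀ (q : ℕ → σ) (v : ℕ → ι → ℕ), (∀ i < N, v i ≤ b i) →
      ∃ i j, i < j ∧ j < N ∧ q i = q j ∧ v i ≤ v j := by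
  have hr : WellQuasiOrdered fun s t : σ × (ι → ℕ) => s.1 = t.1 ∧ s.2 ≤ t.2 :=
    (Finite.wellQuasiOrdered (· = ·)).prod wellQuasiOrdered_le
  have finite_Iic_bound (i : ℕ) : (Iic (b i)).Finite := by
    simpa only [pi_univ_Iic] using Finite.pi fun k => finite_Iic (b i k)
  have hA (i : ℕ) : ((univ : Set σ) ×ˢ Iic (b i)).Finite :=
    finite_univ.prod (finite_Iic_bound i)
  obtain ⟨N, hN⟩ := exists_length_bound_of_finite hr hA
  refine ⟨N + 1, N.succ_pos, fun q v hv => ?_⟩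
  obtain ⟨i, j, hij, hj, h⟩ := hN (fun i => (q i, v i)) fun i hi =>
    ⟨mem_univ _, hv i (hi.trans N.lt_succ_self)⟩
  exact ⟨i, j, hij, hj.trans N.lt_succ_self, h⟩

/-- Extendability of trace reversal resembling sequences: for a fixed finite set
of states `S` there is `N > 0` such that every sequence
`(Q_0,f_0),…,(Q_m,f_m)` with `m > N`, `Q_i ⊆ S`, and `f_i` mapping nonempty
subsets of `S` into `{0,…,i}`, admits indices `i < j < N` with `Q i = Q j` and
`f i ≤ f j` on nonempty subsets. -/
theorem trace_reversal_extendable (S : Type) [Fintype S] :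
    ∃ N : ℕ, 0 < N ∧
      ∀ (m : ℕ) (Q : ℕ → Set S) (f : ℕ → Set S → ℕ),
        N < m →
        (∀ i ≤ m, ∀ R : Set S, R.Nonempty → f i R ≤ i) →
        ∃ i j, i < j ∧ j < N ∧ Q i = Q j ∧
          ∀ R : Set S, R.Nonempty → f i R ≤ f j R := by
  obtain ⟨N, hpos, hN⟩ :=
    trace_reversal_extendable_general (σ := Set S) (ι := {R : Set S // R.Nonempty}) fun i _ => i
  refine ⟨N, hpos, fun m Q f hm hf => ?_⟩
  simpa only [Pi.le_def, Subtype.forall] using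
    hN Q (fun i R => f i R) fun i hi R => hf i (hi.trans hm).le R R.2
end
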